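/- Let (X,d) be a complete separable metric space, let p ≥ 1 and C > 0, let μ be a finite Borel measure on X and (μ_n)_{n ∈ ℕ} a sequence of finite Borel measures on X. Then KR_{p,C}(μ_n, μ) → 0 as n → ∞ if and only if μ_n converges weakly to μ, i.e. ∫ f dμ_n → ∫ f dμ for every bounded continuous function f : X → ℝ. -/

import Mathlib

/-!
Only the convergence of `KRpow = KR ^ p` matters, as this quantity is finite.

*Weak convergence implies `KRpow → 0`.* Cover `X`, up to `μ`-mass `ε`, by finitely many disjoint
`μ`-continuity sets `E i` of diameter at most `ε` (`exists_almost_partition`). Transporting the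
mass `min (μₙ (E i)) (μ (E i))` inside each cell costs at most
`ε ^ p * μ X + C ^ p * ((μₙ X + μ X) / 2 - ∑ i, min (μₙ (E i)) (μ (E i)))`
(`KRpow_le_of_partition`), and by the portmanteau theorem
(`tendsto_measure_of_continuitySet`) the limit of this bound is at most `ε ^ p * μ X + C ^ p * ε`.

*`KRpow → 0` implies weak convergence.* Let `f` be bounded and continuous. Outside a set `E` of
small `μ`-measure, `f` varies by at most `η` within some distance `δ`
(`exists_oscillation_set`). A sub-coupling of small cost leaves little mass untransported and moves
little mass over distance `δ` or more (`exists_subcoupling_of_KRpow_lt`), so the two integrals of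
`f` are close (`IsSubcoupling.abs_integral_sub_le`). As `E` depends only on the fixed measure `μ`,
the estimate is uniform in `n`.
-/

open MeasureTheory ENNReal

noncomputable section

variable {X : Type*} [MetricSpace X] [MeasurableSpace X]

/-- `π` is a sub-coupling of `(μ, ν)`: it puts at most `μ`-mass on `A × X` and
at most `ν`-mass on `X × B`, for all Borel sets `A, B`. -/
def IsSubcoupling (μ ν : Measure X) (π : Measure (X × X)) : Prop :=
  (∀ A : Set X, MeasurableSet A → π (A ×ˢ (Set.univ : Set X)) ≤ μ A) ∧
  (∀ B : Set X, MeasurableSet B → π ((Set.univ : Set X) ×ˢ B) ≤ ν B)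

/-- The objective of the `(p,C)`-Kantorovich–Rubinstein problem at a plan `π`:
`∫ d(x,y)^p dπ + C^p ((m_μ + m_ν)/2 − m_π)`. -/
def KRcost (p C : ℝ) (μ ν : Measure X) (π : Measure (X × X)) : ℝ≥0∞ :=
  (∫⁻ z, ENNReal.ofReal (dist z.1 z.2 ^ p) ∂π) +
    ENNReal.ofReal (C ^ p) * ((μ Set.univ + ν Set.univ) / 2 - π Set.univ)

/-- `KR_{p,C}(μ,ν)^p`, the infimum of the Kantorovich–Rubinstein objective over
all sub-couplings of `(μ, ν)`. -/
def KRpow (p C : ℝ) (μ ν : Measure X) : ℝ≥0∞ :=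
  ⨅ (π : Measure (X × X)) (_ : IsSubcoupling μ ν π), KRcost p C μ ν π

/-- The `(p,C)`-Kantorovich–Rubinstein distance. -/
def KR (p C : ℝ) (μ ν : Measure X) : ℝ :=
  (KRpow p C μ ν).toReal ^ (1 / p)

open Filter Topology

/-! ### Weak convergence implies `KR`-convergence -/

/-- The portmanteau theorem for continuity sets, for finite measures of varying mass. Mathlib's
version concerns probability measures; here the convergence of total masses, got by testing
against the constant `1`, replaces the normalisation. -/
lemma tendsto_measure_of_continuitySet [BorelSpace X]
    {μ : Measure X} [IsFiniteMeasure μ] {μs : ℕ → Measure X} [hμs : ∀ n, IsFiniteMeasure (μs n)]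
    (h : ∀ f : BoundedContinuousFunction X ℝ,
      Tendsto (fun n => ∫ x, f x ∂(μs n)) atTop (𝓝 (∫ x, f x ∂μ)))
    {E : Set X} (hE : MeasurableSet E) (hE0 : μ (frontier E) = 0) :
    Tendsto (fun n => μs n E) atTop (𝓝 (μ E)) := by
  let P : FiniteMeasure X := ⟨μ, inferInstance⟩
  let Ps : ℕ → FiniteMeasure X := fun n => ⟨μs n, hμs n⟩
  have hw : Tendsto Ps atTop (𝓝 P) :=
    FiniteMeasure.tendsto_iff_forall_integral_tendsto.2 h
  have hmass : Tendsto (fun n => (μs n).real Set.univ) atTop (𝓝 (μ.real Set.univ)) := by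
    simpa using h (BoundedContinuousFunction.const X 1)
  -- The lower bound for `E` comes from this upper bound for `Eᶜ` and the convergence of masses.
  have hupper : ∀ F : Set X, μ (frontier F) = 0 → ∀ ε > 0,
      ∀ᶠ n in atTop, (μs n).real F < μ.real F + ε := by
    intro F hF ε hε
    have hcl : μ (closure F) = μ F := by
      refine le_antisymm ?_ (measure_mono subset_closure)
      calc μ (closure F) = μ (F ∪ frontier F) := by rw [← closure_eq_self_union_frontier]
        _ ≤ μ F + μ (frontier F) := measure_union_le _ _
        _ = μ F := by rw [hF, add_zero]
    have hlim : atTop.limsup (fun n => μs n (closure F)) ≤ μ (closure F) :=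
      FiniteMeasure.limsup_measure_closed_le_of_tendsto hw isClosed_closure
    rw [hcl] at hlim
    have hlt : atTop.limsup (fun n => μs n (closure F)) < μ F + ENNReal.ofReal ε :=
      hlim.trans_lt (ENNReal.lt_add_right (measure_ne_top _ _) (by simpa using hε))
    filter_upwards [eventually_lt_of_limsup_lt hlt] with n hn
    have h1 := (measure_mono subset_closure).trans_lt hn
    rw [← ENNReal.toReal_lt_toReal (measure_ne_top _ _) (by finiteness),
      ENNReal.toReal_add (by finiteness) (by finiteness), ENNReal.toReal_ofReal hε.le] at h1
    exact h1
  rw [← ENNReal.tendsto_toReal_iff (fun n => measure_ne_top _ _) (measure_ne_top _ _)]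
  rw [Metric.tendsto_nhds]
  intro ε hε
  have hm := Metric.tendsto_nhds.1 hmass (ε / 2) (by positivity)
  filter_upwards [hm, hupper E hE0 ε hε, hupper Eᶜ (by rwa [frontier_compl]) (ε / 2)
    (by positivity)] with n h1 h2 h3
  have e1 := measureReal_compl (μ := μs n) hE
  have e2 := measureReal_compl (μ := μ) hE
  rw [Real.dist_eq, abs_lt] at h1 ⊢
  simp only [measureReal_def] at *
  constructor <;> linarith [h1.1, h1.2]

/-- Up to mass `ε`, the space is covered by finitely many disjoint `μ`-continuity sets of diameter at
most `ε`: disjointify balls, with `μ`-null frontiers, around the points of a dense sequence. -/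
lemma exists_almost_partition [TopologicalSpace.SeparableSpace X] [BorelSpace X]
    (μ : Measure X) [IsFiniteMeasure μ] {ε : ℝ} (hε : 0 < ε) :
    ∃ (N : ℕ) (E : ℕ → Set X), (∀ i, MeasurableSet (E i)) ∧ Pairwise (Function.onFun Disjoint E) ∧
      (∀ i, μ (frontier (E i)) = 0) ∧ (∀ i, ∀ x ∈ E i, ∀ y ∈ E i, dist x y ≤ ε) ∧
      μ Set.univ < ∑ i ∈ Finset.range N, μ (E i) + ENNReal.ofReal ε := by
  rcases isEmpty_or_nonempty X with hX | hX
  · refine ⟨0, fun _ => ∅, by simp, fun _ _ _ => by simp [Function.onFun], by simp, by simp, ?_⟩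
    simpa [Measure.eq_zero_of_isEmpty μ] using hε
  obtain ⟨u, hu⟩ := TopologicalSpace.exists_dense_seq X
  have hr := fun i => exists_null_frontier_thickening μ {u i}
    (show ε / 4 < ε / 2 by linarith)
  choose r hr hr0 using hr
  set B : ℕ → Set X := fun i => Metric.thickening (r i) {u i} with hB
  have hBm : ∀ i, MeasurableSet (B i) := fun i => Metric.isOpen_thickening.measurableSet
  have hEm : ∀ i, MeasurableSet (disjointed B i) := fun i => MeasurableSet.disjointed hBm i
  have hcov : ⋃ i, disjointed B i = Set.univ := by
    rw [iUnion_disjointed, Set.eq_univ_iff_forall]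
    intro x
    obtain ⟨i, hi⟩ := hu.exists_dist_lt x (show 0 < ε / 4 by linarith)
    refine Set.mem_iUnion.2 ⟨i, ?_⟩
    rw [hB]
    simp only [Metric.thickening_singleton, Metric.mem_ball]
    exact hi.trans (hr i).1
  have hsum : HasSum (fun i => μ (disjointed B i)) (μ Set.univ) := by
    rw [← hcov, measure_iUnion (disjoint_disjointed B) hEm]
    exact ENNReal.summable.hasSum
  have hlim := hsum.tendsto_sum_nat.add_const (ENNReal.ofReal ε)
  have hlt : μ Set.univ < μ Set.univ + ENNReal.ofReal ε :=
    ENNReal.lt_add_right (measure_ne_top _ _) (by simpa using hε)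
  obtain ⟨N, hN⟩ := (hlim.eventually (lt_mem_nhds hlt)).exists
  refine ⟨N, disjointed B, hEm, disjoint_disjointed B, ?_, ?_, hN⟩
  · intro i
    refine disjointedRec (p := fun t => μ (frontier t) = 0) ?_ (hr0 i)
    intro t j ht
    have hsub : frontier (t \ B j) ⊆ frontier t ∪ frontier (B j) := by
      rw [Set.sdiff_eq, ← frontier_compl (B j)]
      exact (frontier_inter_subset _ _).trans
        (Set.union_subset_union Set.inter_subset_left Set.inter_subset_right)
    exact measure_mono_null hsub (measure_union_null ht (hr0 j))
  · intro i x hx y hy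
    have hx' := disjointed_subset B i hx
    have hy' := disjointed_subset B i hy
    simp only [hB, Metric.thickening_singleton, Metric.mem_ball] at hx' hy'
    have := dist_triangle_right x y (u i)
    linarith [(hr i).2]

/-- The sub-coupling behind this bound transports mass within each cell only, and as much of it as
possible: on `E i` it is the multiple of the product of the restrictions with mass
`min (μ (E i)) (ν (E i))`. -/
lemma KRpow_le_of_partition [TopologicalSpace.SeparableSpace X] [BorelSpace X]
    {p C ε : ℝ} (hp : 0 ≤ p) (μ ν : Measure X) [IsFiniteMeasure μ]
    [IsFiniteMeasure ν] (N : ℕ) (E : ℕ → Set X) (hEm : ∀ i, MeasurableSet (E i))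
    (hEd : Pairwise (Function.onFun Disjoint E))
    (hdist : ∀ i, ∀ x ∈ E i, ∀ y ∈ E i, dist x y ≤ ε) :
    KRpow p C μ ν ≤ ENNReal.ofReal (ε ^ p) * ν Set.univ + ENNReal.ofReal (C ^ p) *
      ((μ Set.univ + ν Set.univ) / 2 - ∑ i ∈ Finset.range N, min (μ (E i)) (ν (E i))) := by
  -- When both measures of `E i` vanish this weight is `∞`, but it then multiplies a zero measure.
  set c : ℕ → ℝ≥0∞ := fun i => (max (μ (E i)) (ν (E i)))⁻¹ with hc
  set π : Measure (X × X) :=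
    ∑ i ∈ Finset.range N, c i • (μ.restrict (E i)).prod (ν.restrict (E i)) with hπ
  have hcμ : ∀ i, c i * μ (E i) ≤ 1 := fun i =>
    (mul_le_mul_right (le_max_left _ _) _).trans (ENNReal.inv_mul_le_one _)
  have hcν : ∀ i, c i * ν (E i) ≤ 1 := fun i =>
    (mul_le_mul_right (le_max_right _ _) _).trans (ENNReal.inv_mul_le_one _)
  have hmass : ∀ i, c i * (μ (E i) * ν (E i)) = min (μ (E i)) (ν (E i)) := by
    intro i
    rw [← min_mul_max (μ (E i)), mul_comm (min _ _), ← mul_assoc]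
    rcases eq_or_ne (max (μ (E i)) (ν (E i))) 0 with h0 | h0
    · have := max_eq_zero.1 h0
      simp [this.1]
    · rw [ENNReal.inv_mul_cancel h0 (by finiteness), one_mul]
  have hsumle : ∀ (κ : Measure X) (A : Set X), MeasurableSet A →
      ∑ i ∈ Finset.range N, κ (A ∩ E i) ≤ κ A := by
    intro κ A hA
    rw [← measure_biUnion_finset]
    · exact measure_mono (Set.iUnion₂_subset fun _ _ => Set.inter_subset_left)
    · intro i _ j _ hij
      exact (hEd hij).mono Set.inter_subset_right Set.inter_subset_right
    · exact fun i _ => hA.inter (hEm i)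
  have hsub : IsSubcoupling μ ν π := by
    constructor
    · intro A hA
      refine le_trans ?_ (hsumle μ A hA)
      rw [hπ, Measure.finsetSum_apply]
      refine Finset.sum_le_sum fun i _ => ?_
      rw [Measure.smul_apply, Measure.prod_prod, Measure.restrict_apply hA,
        Measure.restrict_apply_univ, smul_eq_mul, mul_left_comm]
      exact mul_le_of_le_one_right' (hcν i)
    · intro A hA
      refine le_trans ?_ (hsumle ν A hA)
      rw [hπ, Measure.finsetSum_apply]
      refine Finset.sum_le_sum fun i _ => ?_
      rw [Measure.smul_apply, Measure.prod_prod, Measure.restrict_apply hA,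
        Measure.restrict_apply_univ, smul_eq_mul, ← mul_assoc]
      exact mul_le_of_le_one_left' (hcμ i)
  have hπm : π Set.univ = ∑ i ∈ Finset.range N, min (μ (E i)) (ν (E i)) := by
    rw [hπ, Measure.finsetSum_apply]
    refine Finset.sum_congr rfl fun i _ => ?_
    rw [Measure.smul_apply, ← Set.univ_prod_univ, Measure.prod_prod, Measure.restrict_apply_univ,
      Measure.restrict_apply_univ, smul_eq_mul, hmass]
  have hae : ∀ᵐ z ∂π, dist z.1 z.2 ≤ ε := by
    rw [hπ, ae_iff, Measure.finsetSum_apply]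
    refine Finset.sum_eq_zero fun i _ => ?_
    rw [Measure.smul_apply, Measure.prod_restrict, Measure.restrict_apply']
    · have : {z : X × X | ¬ dist z.1 z.2 ≤ ε} ∩ E i ×ˢ E i = ∅ := by
        ext z
        simp only [Set.mem_inter_iff, Set.mem_ofPred_eq, Set.mem_prod, Set.mem_empty_iff_false,
          iff_false]
        exact fun h => h.1 (hdist i _ h.2.1 _ h.2.2)
      rw [this]; simp
    · exact (hEm i).prod (hEm i)
  refine (iInf₂_le π hsub).trans ?_
  rw [KRcost, ← hπm]
  gcongr
  calc ∫⁻ z, ENNReal.ofReal (dist z.1 z.2 ^ p) ∂π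
      ≤ ∫⁻ z, ENNReal.ofReal (ε ^ p) ∂π := by
        refine lintegral_mono_ae ?_
        filter_upwards [hae] with z hz
        exact ENNReal.ofReal_le_ofReal (Real.rpow_le_rpow dist_nonneg hz hp)
    _ = ENNReal.ofReal (ε ^ p) * π Set.univ := lintegral_const _
    _ ≤ ENNReal.ofReal (ε ^ p) * ν Set.univ := by
        gcongr
        simpa using hsub.2 Set.univ MeasurableSet.univ

lemma KRpow_tendsto_zero_of_weak [TopologicalSpace.SeparableSpace X] [BorelSpace X]
    {p C : ℝ} (hp : 1 ≤ p)
    {μ : Measure X} [IsFiniteMeasure μ] {μs : ℕ → Measure X} [∀ n, IsFiniteMeasure (μs n)]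
    (h : ∀ f : BoundedContinuousFunction X ℝ,
      Tendsto (fun n => ∫ x, f x ∂(μs n)) atTop (𝓝 (∫ x, f x ∂μ))) :
    Tendsto (fun n => KRpow p C (μs n) μ) atTop (𝓝 0) := by
  rw [ENNReal.tendsto_nhds_zero]
  intro η hη
  set K : ℝ≥0∞ := μ Set.univ + ENNReal.ofReal (C ^ p) with hK
  have hKlim : Tendsto (fun t : ℝ => ENNReal.ofReal t * K) (𝓝[>] 0) (𝓝 0) := by
    have h0 : Tendsto (fun t : ℝ => ENNReal.ofReal t) (𝓝[>] 0) (𝓝 0) := by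
      simpa using (ENNReal.continuous_ofReal.tendsto 0).mono_left nhdsWithin_le_nhds
    simpa using ENNReal.Tendsto.mul_const h0 (b := K) (Or.inr (by finiteness))
  obtain ⟨ε, hεη, hε0, hε1⟩ := ((hKlim.eventually (gt_mem_nhds hη)).and
    (Ioo_mem_nhdsGT (zero_lt_one' ℝ))).exists
  obtain ⟨N, E, hEm, hEd, hEf, hdist, hN⟩ := exists_almost_partition μ hε0
  have hlim : Tendsto (fun n => ENNReal.ofReal (ε ^ p) * μ Set.univ + ENNReal.ofReal (C ^ p) *
      ((μs n Set.univ + μ Set.univ) / 2 - ∑ i ∈ Finset.range N, min (μs n (E i)) (μ (E i)))) atTop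
      (𝓝 (ENNReal.ofReal (ε ^ p) * μ Set.univ + ENNReal.ofReal (C ^ p) *
      ((μ Set.univ + μ Set.univ) / 2 - ∑ i ∈ Finset.range N, min (μ (E i)) (μ (E i))))) := by
    refine tendsto_const_nhds.add (ENNReal.Tendsto.const_mul (ENNReal.Tendsto.sub ?_ ?_ ?_) ?_)
    · refine ENNReal.Tendsto.div_const ?_ (Or.inr (by simp))
      exact (tendsto_measure_of_continuitySet h MeasurableSet.univ (by simp)).add_const _
    · exact tendsto_finsetSum _ fun i _ =>
        (tendsto_measure_of_continuitySet h (hEm i) (hEf i)).min tendsto_const_nhds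
    · exact Or.inl (by finiteness)
    · exact Or.inr (by finiteness)
  -- The limiting bound is at most `ε * K`, because `ε ^ p ≤ ε` for `ε < 1 ≤ p`.
  have hlt : ENNReal.ofReal (ε ^ p) * μ Set.univ + ENNReal.ofReal (C ^ p) *
      ((μ Set.univ + μ Set.univ) / 2 - ∑ i ∈ Finset.range N, min (μ (E i)) (μ (E i))) < η := by
    refine lt_of_le_of_lt ?_ hεη
    rw [hK, mul_add, mul_comm (ENNReal.ofReal (C ^ p)), ENNReal.add_div, ENNReal.add_halves]
    gcongr
    · simpa using Real.rpow_le_rpow_of_exponent_ge hε0 hε1.le hp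
    · simp only [min_self]
      exact tsub_le_iff_left.2 hN.le
  filter_upwards [hlim.eventually (gt_mem_nhds hlt)] with n hn
  exact (KRpow_le_of_partition (by linarith) (μs n) μ N E hEm hEd hdist).trans hn.le

/-! ### `KR`-convergence implies weak convergence -/

lemma abs_integral_sub_le_of_le [BorelSpace X] {μ ν : Measure X} [IsFiniteMeasure μ]
    [IsFiniteMeasure ν] (h : ν ≤ μ) (f : BoundedContinuousFunction X ℝ) :
    |∫ x, f x ∂μ - ∫ x, f x ∂ν| ≤ ‖f‖ * (μ.real Set.univ - ν.real Set.univ) := by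
  have hadd : μ - ν + ν = μ := Measure.sub_add_cancel_of_le h
  have h1 : ∫ x, f x ∂μ = ∫ x, f x ∂(μ - ν) + ∫ x, f x ∂ν := by
    rw [← integral_add_measure (f.integrable _) (f.integrable _), hadd]
  have h2 : μ.real Set.univ = (μ - ν).real Set.univ + ν.real Set.univ := by
    rw [← measureReal_add_apply, hadd]
  rw [h1, h2, add_sub_cancel_right, add_sub_cancel_right, mul_comm]
  exact f.norm_integral_le_mul_norm (μ - ν)

lemma IsSubcoupling.map_fst_le {μ ν : Measure X} {π : Measure (X × X)}
    (h : IsSubcoupling μ ν π) : π.map Prod.fst ≤ μ := by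
  refine Measure.le_iff.2 fun A hA => ?_
  rw [Measure.map_apply measurable_fst hA, ← Set.prod_univ]
  exact h.1 A hA

lemma IsSubcoupling.map_snd_le {μ ν : Measure X} {π : Measure (X × X)}
    (h : IsSubcoupling μ ν π) : π.map Prod.snd ≤ ν := by
  refine Measure.le_iff.2 fun A hA => ?_
  rw [Measure.map_apply measurable_snd hA, ← Set.univ_prod]
  exact h.2 A hA

lemma IsSubcoupling.isFiniteMeasure {μ ν : Measure X} [IsFiniteMeasure μ] {π : Measure (X × X)}
    (h : IsSubcoupling μ ν π) : IsFiniteMeasure π := by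
  refine ⟨lt_of_le_of_lt ?_ (measure_lt_top μ Set.univ)⟩
  simpa using h.1 Set.univ MeasurableSet.univ

/-- Comparison of integrals through a sub-coupling: the first term pays for the untransported mass,
the second for pairs over which `f` varies by at most `η`, the third for the pairs `(x, y)` with
`y ∈ E` or at distance at least `δ`, where only `|f x - f y| ≤ 2 * ‖f‖` is available. -/
lemma IsSubcoupling.abs_integral_sub_le [TopologicalSpace.SeparableSpace X] [BorelSpace X]
    {μ ν : Measure X} [IsFiniteMeasure μ] [IsFiniteMeasure ν] {π : Measure (X × X)}
    (h : IsSubcoupling μ ν π) (f : BoundedContinuousFunction X ℝ) {η δ : ℝ} (hη : 0 ≤ η)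
    {E : Set X} (hE : MeasurableSet E)
    (hfE : ∀ x, ∀ y ∉ E, dist x y < δ → |f x - f y| ≤ η) :
    |∫ x, f x ∂μ - ∫ x, f x ∂ν| ≤
      ‖f‖ * (μ.real Set.univ + ν.real Set.univ - 2 * π.real Set.univ) + η * ν.real Set.univ +
        2 * ‖f‖ * (ν.real E + π.real {z | δ ≤ dist z.1 z.2}) := by
  have := h.isFiniteMeasure
  have := UniformSpace.secondCountable_of_separable X
  set D : Set (X × X) := {z | δ ≤ dist z.1 z.2} with hD
  have hDm : MeasurableSet D := measurableSet_le measurable_const (by fun_prop)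
  have hEm' : MeasurableSet (Prod.snd ⁻¹' E : Set (X × X)) := measurable_snd hE
  have h1 := abs_integral_sub_le_of_le h.map_fst_le f
  have h2 := abs_integral_sub_le_of_le h.map_snd_le f
  have m1 : (π.map Prod.fst).real Set.univ = π.real Set.univ := by
    rw [map_measureReal_apply measurable_fst MeasurableSet.univ, Set.preimage_univ]
  have m2 : (π.map Prod.snd).real Set.univ = π.real Set.univ := by
    rw [map_measureReal_apply measurable_snd MeasurableSet.univ, Set.preimage_univ]
  rw [m1] at h1
  rw [m2] at h2
  have i1 : Integrable (fun z : X × X => f z.1) π :=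
    (f.integrable (π.map Prod.fst)).comp_measurable measurable_fst
  have i2 : Integrable (fun z : X × X => f z.2) π :=
    (f.integrable (π.map Prod.snd)).comp_measurable measurable_snd
  have e1 : ∫ x, f x ∂(π.map Prod.fst) = ∫ z, f z.1 ∂π :=
    integral_map measurable_fst.aemeasurable f.continuous.aestronglyMeasurable
  have e2 : ∫ x, f x ∂(π.map Prod.snd) = ∫ z, f z.2 ∂π :=
    integral_map measurable_snd.aemeasurable f.continuous.aestronglyMeasurable
  have hEπ : π.real (Prod.snd ⁻¹' E) ≤ ν.real E := by
    rw [← map_measureReal_apply measurable_snd hE]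
    exact ENNReal.toReal_mono (measure_ne_top _ _) (h.map_snd_le E)
  have hπν : π.real Set.univ ≤ ν.real Set.univ := by
    rw [← m2]
    exact ENNReal.toReal_mono (measure_ne_top _ _) (h.map_snd_le Set.univ)
  have h3 : |∫ z, f z.1 ∂π - ∫ z, f z.2 ∂π| ≤ η * π.real Set.univ +
      2 * ‖f‖ * (π.real (Prod.snd ⁻¹' E) + π.real D) := by
    rw [← integral_sub i1 i2]
    have ic : Integrable (fun _ : X × X => η) π := integrable_const _
    have iE : Integrable ((Prod.snd ⁻¹' E : Set (X × X)).indicator fun _ => 2 * ‖f‖) π :=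
      (integrable_const _).indicator hEm'
    have iD : Integrable (D.indicator fun _ => 2 * ‖f‖) π := (integrable_const _).indicator hDm
    calc |∫ z, (f z.1 - f z.2) ∂π|
        ≤ ∫ z, (η + ((Prod.snd ⁻¹' E : Set (X × X)).indicator (fun _ => 2 * ‖f‖) z +
            D.indicator (fun _ => 2 * ‖f‖) z)) ∂π := by
          rw [← Real.norm_eq_abs]
          refine norm_integral_le_of_norm_le (ic.add (iE.add iD)) (Eventually.of_forall fun z => ?_)
          have hbig : ‖f z.1 - f z.2‖ ≤ 2 * ‖f‖ := by
            rw [← dist_eq_norm]; exact f.dist_le_two_norm _ _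
          have n1 : 0 ≤ (Prod.snd ⁻¹' E : Set (X × X)).indicator (fun _ => 2 * ‖f‖) z :=
            Set.indicator_nonneg (fun _ _ => by positivity) _
          have n2 : 0 ≤ D.indicator (fun _ => 2 * ‖f‖) z :=
            Set.indicator_nonneg (fun _ _ => by positivity) _
          by_cases hzE : z ∈ (Prod.snd ⁻¹' E : Set (X × X))
          · rw [Set.indicator_of_mem hzE]
            linarith
          · by_cases hzD : z ∈ D
            · rw [Set.indicator_of_mem hzD]
              linarith
            · have := hfE z.1 z.2 hzE (not_le.1 hzD)
              rw [Real.norm_eq_abs]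
              linarith
      _ = η * π.real Set.univ + 2 * ‖f‖ * (π.real (Prod.snd ⁻¹' E) + π.real D) := by
          have s1 := integral_add ic (iE.add iD)
          simp only [Pi.add_apply] at s1
          rw [s1, integral_add iE iD, integral_const, integral_indicator_const _ hEm', integral_indicator_const _ hDm]
          simp only [smul_eq_mul]
          ring
  rw [e1] at h1
  rw [e2] at h2
  have h4 : η * π.real Set.univ ≤ η * ν.real Set.univ := by gcongr
  have h5 : 2 * ‖f‖ * (π.real (Prod.snd ⁻¹' E) + π.real D) ≤
      2 * ‖f‖ * (ν.real E + π.real D) := by gcongr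
  rw [abs_le] at *
  constructor <;> linarith [h1.1, h1.2, h2.1, h2.2, h3.1, h3.2]

/-- A continuous function is uniformly continuous outside a set of small measure, in the strong sense
that only one of the two points is required to avoid this set. The open sets of points around
which `f` varies by more than `η` within distance `1 / (n + 1)` decrease to `∅`. -/
lemma exists_oscillation_set [BorelSpace X] (μ : Measure X) [IsFiniteMeasure μ]
    {f : X → ℝ} (hf : Continuous f) {η ε : ℝ} (hη : 0 < η) (hε : 0 < ε) :
    ∃ δ > 0, ∃ E : Set X, MeasurableSet E ∧ μ.real E < ε ∧
      ∀ x, ∀ y ∉ E, dist x y < δ → |f x - f y| ≤ η := by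
  set E : ℕ → Set X := fun n => {y | ∃ x, dist x y < 1 / ((n : ℝ) + 1) ∧ η < |f x - f y|} with hE
  have hopen : ∀ n, IsOpen (E n) := by
    intro n
    have : E n = ⋃ x, {y | dist x y < 1 / ((n : ℝ) + 1) ∧ η < |f x - f y|} := by
      ext y; simp [hE]
    rw [this]
    refine isOpen_iUnion fun x => ?_
    have o1 : IsOpen {y | dist x y < 1 / ((n : ℝ) + 1)} := isOpen_lt (by fun_prop) (by fun_prop)
    have o2 : IsOpen {y | η < |f x - f y|} := isOpen_lt (by fun_prop) (by fun_prop)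
    exact o1.inter o2
  have hanti : Antitone E := by
    rintro m n hmn y ⟨x, hx, hxy⟩
    exact ⟨x, hx.trans_le (one_div_le_one_div_of_le (by positivity) (by gcongr)), hxy⟩
  have hempty : ⋂ n, E n = ∅ := by
    refine Set.eq_empty_iff_forall_notMem.2 fun y hy => ?_
    obtain ⟨δ, hδ, hδf⟩ := Metric.continuousAt_iff.1 (hf.continuousAt (x := y)) η hη
    obtain ⟨n, hn⟩ := exists_nat_one_div_lt hδ
    obtain ⟨x, hx, hxy⟩ := Set.mem_iInter.1 hy n
    exact (hδf (hx.trans hn)).not_gt hxy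
  have hlim := tendsto_measure_iInter_atTop (μ := μ)
    (fun n => (hopen n).measurableSet.nullMeasurableSet) hanti ⟨0, measure_ne_top _ _⟩
  rw [hempty, measure_empty] at hlim
  obtain ⟨n, hn⟩ := (hlim.eventually (gt_mem_nhds (ENNReal.ofReal_pos.2 hε))).exists
  refine ⟨1 / ((n : ℝ) + 1), by positivity, E n, (hopen n).measurableSet, ?_, ?_⟩
  · exact (ENNReal.lt_ofReal_iff_toReal_lt (measure_ne_top _ _)).1 hn
  · intro x y hy hxy
    by_contra! hcon
    exact hy ⟨x, hxy, hcon⟩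

/-- A small value of the Kantorovich–Rubinstein problem is witnessed by a sub-coupling leaving little
mass untransported and, by Markov's inequality, moving little mass over distance `δ` or more. -/
lemma exists_subcoupling_of_KRpow_lt [TopologicalSpace.SeparableSpace X] [BorelSpace X]
    {p C c δ : ℝ} (hp : 0 < p) (hC : 0 < C) (hδ : 0 < δ) (hc : 0 < c) {μ ν : Measure X}
    [IsFiniteMeasure μ] [IsFiniteMeasure ν] (h : KRpow p C μ ν < ENNReal.ofReal c) :
    ∃ π, IsSubcoupling μ ν π ∧
      μ.real Set.univ + ν.real Set.univ - 2 * π.real Set.univ ≤ 2 * (c / C ^ p) ∧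
      π.real {z | δ ≤ dist z.1 z.2} ≤ c / δ ^ p := by
  have := UniformSpace.secondCountable_of_separable X
  simp only [KRpow, iInf_lt_iff] at h
  obtain ⟨π, hπ, hlt⟩ := h
  have := hπ.isFiniteMeasure
  have hCp : 0 < C ^ p := Real.rpow_pos_of_pos hC p
  have hδp : 0 < δ ^ p := Real.rpow_pos_of_pos hδ p
  have ha := le_add_self.trans hlt.le
  have hb := le_self_add.trans hlt.le
  refine ⟨π, hπ, ?_, ?_⟩
  · have h1 : (μ Set.univ + ν Set.univ) / 2 - π Set.univ ≤ ENNReal.ofReal (c / C ^ p) := by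
      rw [ENNReal.ofReal_div_of_pos hCp]
      rw [ENNReal.le_div_iff_mul_le (Or.inl (by simpa using hCp)) (Or.inl (by finiteness)),
        mul_comm]
      exact ha
    have h2 := tsub_le_iff_left.1 h1
    have h3 := ENNReal.toReal_mono (by finiteness) h2
    rw [ENNReal.toReal_div, ENNReal.toReal_add (by finiteness) (by finiteness),
      ENNReal.toReal_add (by finiteness) (by finiteness), ENNReal.toReal_ofReal (by positivity),
      ENNReal.toReal_ofNat] at h3
    simp only [measureReal_def]
    linarith
  · have hmeas : Measurable fun z : X × X => ENNReal.ofReal (dist z.1 z.2 ^ p) := by fun_prop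
    have h1 := (mul_meas_ge_le_lintegral (μ := π) hmeas (ENNReal.ofReal (δ ^ p))).trans hb
    have h2 : {z : X × X | δ ≤ dist z.1 z.2} ⊆
        {z | ENNReal.ofReal (δ ^ p) ≤ ENNReal.ofReal (dist z.1 z.2 ^ p)} := fun z hz =>
      ENNReal.ofReal_le_ofReal (Real.rpow_le_rpow hδ.le hz hp.le)
    have h3 : ENNReal.ofReal (δ ^ p) * π {z | δ ≤ dist z.1 z.2} ≤ ENNReal.ofReal c :=
      (by gcongr : _ ≤ _).trans h1
    have h4 := ENNReal.toReal_mono (by finiteness) h3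
    rw [ENNReal.toReal_mul, ENNReal.toReal_ofReal hδp.le, ENNReal.toReal_ofReal hc.le] at h4
    rw [le_div_iff₀ hδp, mul_comm]
    exact h4

lemma weak_of_KRpow_tendsto_zero [TopologicalSpace.SeparableSpace X] [BorelSpace X]
    {p C : ℝ} (hp : 0 < p) (hC : 0 < C)
    {μ : Measure X} [IsFiniteMeasure μ] {μs : ℕ → Measure X} [∀ n, IsFiniteMeasure (μs n)]
    (h : Tendsto (fun n => KRpow p C (μs n) μ) atTop (𝓝 0)) (f : BoundedContinuousFunction X ℝ) :
    Tendsto (fun n => ∫ x, f x ∂(μs n)) atTop (𝓝 (∫ x, f x ∂μ)) := by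
  rw [Metric.tendsto_nhds]
  intro ε hε
  -- Each of the three errors (`η`, the bad set `E`, the cost of `π`) is kept below `ε / 4`.
  have hη : 0 < ε / 4 / (μ.real Set.univ + 1) := by positivity
  obtain ⟨δ, hδ, E, hEm, hE, hfE⟩ := exists_oscillation_set μ f.continuous hη
    (show 0 < ε / 4 / (2 * ‖f‖ + 1) by positivity)
  have hCp : 0 < C ^ p := Real.rpow_pos_of_pos hC p
  have hδp : 0 < δ ^ p := Real.rpow_pos_of_pos hδ p
  set M : ℝ := 2 * ‖f‖ / C ^ p + 2 * ‖f‖ / δ ^ p with hM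
  have hM0 : 0 ≤ M := by positivity
  have hc : 0 < ε / 4 / (M + 1) := by positivity
  filter_upwards [h.eventually (gt_mem_nhds (ENNReal.ofReal_pos.2 hc))] with n hn
  obtain ⟨π, hπ, h1, h2⟩ := exists_subcoupling_of_KRpow_lt hp hC hδ hc hn
  have hle := hπ.abs_integral_sub_le f hη.le hEm hfE
  rw [Real.dist_eq]
  refine hle.trans_lt ?_
  set c := ε / 4 / (M + 1) with hcdef
  have hfrac : ∀ t : ℝ, 0 ≤ t → ε / 4 / (t + 1) * t ≤ ε / 4 := by
    intro t ht
    rw [div_mul_eq_mul_div, div_le_iff₀ (by positivity)]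
    nlinarith
  have k1 := hfrac (μ.real Set.univ) measureReal_nonneg
  have k2 : 2 * ‖f‖ * μ.real E ≤ ε / 4 := by
    have := hfrac (2 * ‖f‖) (by positivity)
    rw [mul_comm] at this
    exact (mul_le_mul_of_nonneg_left hE.le (by positivity)).trans this
  have k3 : c * M ≤ ε / 4 := hfrac M hM0
  have k4 := mul_le_mul_of_nonneg_left h1 (norm_nonneg f)
  have k5 := mul_le_mul_of_nonneg_left h2 (show 0 ≤ 2 * ‖f‖ by positivity)
  have k6 : ‖f‖ * (2 * (c / C ^ p)) + 2 * ‖f‖ * (c / δ ^ p) = c * M := by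
    rw [hM]; ring
  linarith

/-! ### Passing between `KR` and its `p`-th power -/

/-- The zero sub-coupling has finite cost, so `toReal` in `KR` loses no information. -/
lemma KRpow_ne_top (p C : ℝ) (μ ν : Measure X) [IsFiniteMeasure μ] [IsFiniteMeasure ν] :
    KRpow p C μ ν ≠ ∞ := by
  have h0 : IsSubcoupling μ ν 0 := ⟨fun A _ => by simp, fun B _ => by simp⟩
  refine ne_top_of_le_ne_top ?_ (iInf₂_le 0 h0)
  rw [KRcost]
  simp only [lintegral_zero_measure, Measure.coe_zero, Pi.zero_apply, tsub_zero, zero_add]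
  finiteness

lemma tendsto_KR_iff {p C : ℝ} (hp : 0 < p) {μ : Measure X} [IsFiniteMeasure μ]
    {μs : ℕ → Measure X} [∀ n, IsFiniteMeasure (μs n)] :
    Tendsto (fun n => KR p C (μs n) μ) atTop (𝓝 0) ↔
      Tendsto (fun n => KRpow p C (μs n) μ) atTop (𝓝 0) := by
  rw [← ENNReal.tendsto_toReal_iff (fun n => KRpow_ne_top p C (μs n) μ) ENNReal.zero_ne_top,
    ENNReal.toReal_zero]
  constructor
  · intro h
    have h1 := h.rpow_const (p := p) (Or.inr hp.le)
    rw [Real.zero_rpow hp.ne'] at h1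
    refine h1.congr fun n => ?_
    rw [KR, ← Real.rpow_mul ENNReal.toReal_nonneg, one_div_mul_cancel hp.ne', Real.rpow_one]
  · intro h
    have h1 := h.rpow_const (p := 1 / p) (Or.inr (by positivity))
    rwa [Real.zero_rpow (by positivity)] at h1

/-- `KR_{p,C}(μ_n, μ) → 0` if and only if `μ_n` converges weakly to `μ`,
i.e. `∫ f dμ_n → ∫ f dμ` for every bounded continuous `f : X → ℝ`. -/
theorem statement10 [CompleteSpace X] [TopologicalSpace.SeparableSpace X] [BorelSpace X]
    (p C : ℝ) (hp : 1 ≤ p) (hC : 0 < C)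
    (μ : Measure X) [IsFiniteMeasure μ]
    (μs : ℕ → Measure X) (hμs : ∀ n, IsFiniteMeasure (μs n)) :
    Filter.Tendsto (fun n => KR p C (μs n) μ) Filter.atTop (nhds 0) ↔
      ∀ f : BoundedContinuousFunction X ℝ,
        Filter.Tendsto (fun n => ∫ x, f x ∂(μs n)) Filter.atTop (nhds (∫ x, f x ∂μ)) := by
  have hp0 : 0 < p := by linarith
  rw [tendsto_KR_iff hp0]
  exact ⟨fun h f => weak_of_KRpow_tendsto_zero hp0 hC h f, fun h => KRpow_tendsto_zero_of_weak hp h⟩
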